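/- arXiv:1710.08837 — 5 statements merged into one kernel-verified Lean document; each statement's English description precedes it below -/
import Mathlib

section
/- The map ζ sending the isomorphism class [M] of a brick M to the torsion class Filt(Gen(M)) is a bijection from the set of isomorphism classes of bricks over Λ onto the set of completely join-irreducible elements of the lattice tors Λ ordered by containment. -/
/-!
Common definitions: the category `mod Λ` of finite(-dimensional) left `Λ`-modules,
torsion(-free) classes, filtration closures, bricks, minimal (co-)extending modules,
and the lattice-theoretic notions for `tors Λ` (ordered by containment).
-/

/-- A bundled (left) `Λ`-module with carrier in `Type`. -/
structure Mdl (Λ : Type) [Ring Λ] : Type 1 where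
  carrier : Type
  [isAddCommGroup : AddCommGroup carrier]
  [isModule : Module Λ carrier]

attribute [instance] Mdl.isAddCommGroup Mdl.isModule

instance {Λ : Type} [Ring Λ] : CoeSort (Mdl Λ) Type :=
  ⟨Mdl.carrier⟩

variable (Λ : Type) [Ring Λ]

/-- Bundle a module. -/
def Mdl.of (X : Type) [AddCommGroup X] [Module Λ X] : Mdl Λ :=
  { carrier := X }

/-- `M` and `N` are isomorphic `Λ`-modules. -/
def MIso (M N : Mdl Λ) : Prop :=
  Nonempty (M.carrier ≃ₗ[Λ] N.carrier)

/-- `N` is a factor (quotient) module of `M`. -/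
def IsFactor (M N : Mdl Λ) : Prop :=
  ∃ f : M.carrier →ₗ[Λ] N.carrier, Function.Surjective f

/-- `N` is a proper factor of `M` (a quotient by a nonzero submodule). -/
def IsProperFactor (M N : Mdl Λ) : Prop :=
  ∃ f : M.carrier →ₗ[Λ] N.carrier, Function.Surjective f ∧ ¬ Function.Injective f

/-- `N` is (isomorphic to) a submodule of `M`. -/
def IsSubmoduleOf (N M : Mdl Λ) : Prop :=
  ∃ f : N.carrier →ₗ[Λ] M.carrier, Function.Injective f

/-- `N` is (isomorphic to) a proper submodule of `M`. -/
def IsProperSubmoduleOf (N M : Mdl Λ) : Prop :=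
  ∃ f : N.carrier →ₗ[Λ] M.carrier, Function.Injective f ∧ ¬ Function.Surjective f

/-- `D` is (isomorphic to) a direct summand of `N`. -/
def IsSummand (D N : Mdl Λ) : Prop :=
  ∃ (i : D.carrier →ₗ[Λ] N.carrier) (p : N.carrier →ₗ[Λ] D.carrier),
    p.comp i = LinearMap.id

/-- `0 → A --f--> M --g--> B → 0` is a short exact sequence. -/
def IsSES {A M B : Mdl Λ} (f : A.carrier →ₗ[Λ] M.carrier)
    (g : M.carrier →ₗ[Λ] B.carrier) : Prop :=
  Function.Injective f ∧ Function.Surjective g ∧ LinearMap.range f = LinearMap.ker g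

/-- The short exact sequence `0 → A --f--> M --g--> B → 0` splits. -/
def SplitsSES {A M B : Mdl Λ} (_f : A.carrier →ₗ[Λ] M.carrier)
    (g : M.carrier →ₗ[Λ] B.carrier) : Prop :=
  ∃ s : B.carrier →ₗ[Λ] M.carrier, g.comp s = LinearMap.id

/-- `M` is an extension of `B` by `A`, i.e. there is a s.e.s. `0 → A → M → B → 0`. -/
def ExtOf (M A B : Mdl Λ) : Prop :=
  ∃ (f : A.carrier →ₗ[Λ] M.carrier) (g : M.carrier →ₗ[Λ] B.carrier), IsSES Λ f g

/-- A torsion class in `mod Λ`: a class of finite(-dimensional) modules containing `0`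
and closed under isomorphisms, factor modules and extensions. -/
structure IsTorsionClass (T : Set (Mdl Λ)) : Prop where
  fin : ∀ M ∈ T, Module.Finite Λ M.carrier
  zero_mem : ∀ M : Mdl Λ, Subsingleton M.carrier → M ∈ T
  iso_closed : ∀ M ∈ T, ∀ N : Mdl Λ, MIso Λ M N → N ∈ T
  factor_closed : ∀ M ∈ T, ∀ N : Mdl Λ, IsFactor Λ M N → N ∈ T
  ext_closed : ∀ A ∈ T, ∀ B ∈ T, ∀ M : Mdl Λ, ExtOf Λ M A B → M ∈ T

/-- A torsion-free class in `mod Λ`: a class of finite(-dimensional) modules containing `0`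
and closed under isomorphisms, submodules and extensions. -/
structure IsTorsionFreeClass (F : Set (Mdl Λ)) : Prop where
  fin : ∀ M ∈ F, Module.Finite Λ M.carrier
  zero_mem : ∀ M : Mdl Λ, Subsingleton M.carrier → M ∈ F
  iso_closed : ∀ M ∈ F, ∀ N : Mdl Λ, MIso Λ M N → N ∈ F
  sub_closed : ∀ M ∈ F, ∀ N : Mdl Λ, IsSubmoduleOf Λ N M → N ∈ F
  ext_closed : ∀ A ∈ F, ∀ B ∈ F, ∀ M : Mdl Λ, ExtOf Λ M A B → M ∈ F

/-- `Filt S M`: `M` admits a filtration `0 = M₀ ⊆ M₁ ⊆ ⋯ ⊆ M_l = M` whose successive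
quotients are isomorphic to modules in `S`. -/
inductive Filt (S : Set (Mdl Λ)) : Mdl Λ → Prop
  | of_subsingleton (M : Mdl Λ) (h : Subsingleton M.carrier) : Filt S M
  | step (M : Mdl Λ) (N : Submodule Λ M.carrier) (X : Mdl Λ) (hX : X ∈ S)
      (hN : Filt S (Mdl.of Λ N)) (e : Nonempty ((M.carrier ⧸ N) ≃ₗ[Λ] X.carrier)) :
      Filt S M

/-- The filtration closure `Filt(S)` as a set of modules. -/
def FiltSet (S : Set (Mdl Λ)) : Set (Mdl Λ) := {M | Filt Λ S M}

/-- `Gen(M)`: the class of factor modules of finite direct sums of copies of `M`. -/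
def GenSet (M : Mdl Λ) : Set (Mdl Λ) :=
  {N | ∃ (n : ℕ) (f : (Fin n → M.carrier) →ₗ[Λ] N.carrier), Function.Surjective f}

/-- `T^⊥ = {X ∈ mod Λ : Hom_Λ(N, X) = 0 for all N ∈ T}`. -/
def Perp (T : Set (Mdl Λ)) : Set (Mdl Λ) :=
  {X | Module.Finite Λ X.carrier ∧ ∀ N ∈ T, ∀ f : N.carrier →ₗ[Λ] X.carrier, f = 0}

/-- A brick: a module (in `mod Λ`) whose endomorphism ring is a division ring,
i.e. it is nonzero and every nonzero endomorphism is invertible. -/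
def IsBrick (M : Mdl Λ) : Prop :=
  Module.Finite Λ M.carrier ∧ Nontrivial M.carrier ∧
    ∀ f : M.carrier →ₗ[Λ] M.carrier, f ≠ 0 → Function.Bijective f

/-- An indecomposable module: nonzero, and not the direct sum of two nonzero submodules. -/
def Indec (M : Mdl Λ) : Prop :=
  Nontrivial M.carrier ∧
    ∀ p q : Submodule Λ M.carrier, IsCompl p q → p = ⊥ ∨ q = ⊥

/-- `M` is a minimal extending module for the torsion class `T`:
(P1) every proper factor of `M` is in `T`;
(P2) if `0 → M → X → N → 0` is non-split exact with `N ∈ T`, then `X ∈ T`;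
(P3) `Hom_Λ(T, M) = 0`. -/
structure IsMinExt (T : Set (Mdl Λ)) (M : Mdl Λ) : Prop where
  fin : Module.Finite Λ M.carrier
  p1 : ∀ N : Mdl Λ, IsProperFactor Λ M N → N ∈ T
  p2 : ∀ (X N : Mdl Λ) (f : M.carrier →ₗ[Λ] X.carrier) (g : X.carrier →ₗ[Λ] N.carrier),
      IsSES Λ f g → ¬ SplitsSES Λ f g → N ∈ T → X ∈ T
  p3 : ∀ N ∈ T, ∀ f : N.carrier →ₗ[Λ] M.carrier, f = 0

/-- `M` is a minimal co-extending module for the torsion-free class `F`: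
(P1') every proper submodule of `M` is in `F`;
(P2') if `0 → F' → X → M → 0` is non-split exact with `F' ∈ F`, then `X ∈ F`;
(P3') `Hom_Λ(M, F) = 0`. -/
structure IsMinCoExt (F : Set (Mdl Λ)) (M : Mdl Λ) : Prop where
  fin : Module.Finite Λ M.carrier
  p1 : ∀ N : Mdl Λ, IsProperSubmoduleOf Λ N M → N ∈ F
  p2 : ∀ (X F' : Mdl Λ) (f : F'.carrier →ₗ[Λ] X.carrier) (g : X.carrier →ₗ[Λ] M.carrier),
      IsSES Λ f g → ¬ SplitsSES Λ f g → F' ∈ F → X ∈ F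
  p3 : ∀ F' ∈ F, ∀ f : M.carrier →ₗ[Λ] F'.carrier, f = 0

/-- `T'` covers `T` in the lattice `tors Λ` of torsion classes ordered by containment. -/
def TorsCovers (T' T : Set (Mdl Λ)) : Prop :=
  IsTorsionClass Λ T' ∧ IsTorsionClass Λ T ∧ T ⊂ T' ∧
    ∀ Y : Set (Mdl Λ), IsTorsionClass Λ Y → T ⊂ Y → Y ⊆ T' → Y = T'

/-- `F'` covers `F` in the lattice `torf Λ` of torsion-free classes ordered by containment. -/
def TorfCovers (F' F : Set (Mdl Λ)) : Prop :=
  IsTorsionFreeClass Λ F' ∧ IsTorsionFreeClass Λ F ∧ F ⊂ F' ∧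
    ∀ Y : Set (Mdl Λ), IsTorsionFreeClass Λ Y → F ⊂ Y → Y ⊆ F' → Y = F'

/-- The join `⋁ A` of a family of torsion classes in `tors Λ`: the smallest torsion
class containing all members of `A`. -/
def TorsJoin (A : Set (Set (Mdl Λ))) : Set (Mdl Λ) :=
  ⋂₀ {T : Set (Mdl Λ) | IsTorsionClass Λ T ∧ ∀ S ∈ A, S ⊆ T}

/-- A completely join-irreducible element of `tors Λ`: a torsion class `T` such that
`T ∈ A` whenever `A` is a set of torsion classes with `⋁ A = T`. -/
def CompletelyJoinIrred (T : Set (Mdl Λ)) : Prop :=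
  IsTorsionClass Λ T ∧
    ∀ A : Set (Set (Mdl Λ)), (∀ S ∈ A, IsTorsionClass Λ S) → TorsJoin Λ A = T → T ∈ A

/-- The join representation `⋁ A` is irredundant in `tors Λ`:
every proper subset has strictly smaller join. -/
def TorsIrredundant (A : Set (Set (Mdl Λ))) : Prop :=
  ∀ B : Set (Set (Mdl Λ)), B ⊂ A → TorsJoin Λ B ⊂ TorsJoin Λ A

/-- `A` is the canonical join representation of its join in `tors Λ` (equivalently, a face
of the canonical join complex `Γ(tors Λ)`): `⋁ A` is irredundant, and `A ≪ B` for every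
irredundant join representation `⋁ B` of the same element. -/
def TorsCJR (A : Set (Set (Mdl Λ))) : Prop :=
  (∀ S ∈ A, IsTorsionClass Λ S) ∧ TorsIrredundant Λ A ∧
    ∀ B : Set (Set (Mdl Λ)), (∀ S ∈ B, IsTorsionClass Λ S) →
      TorsJoin Λ B = TorsJoin Λ A → TorsIrredundant Λ B → ∀ a ∈ A, ∃ b ∈ B, a ⊆ b

/-- `M` and `N` are hom-orthogonal: `Hom_Λ(M, N) = 0` and `Hom_Λ(N, M) = 0`. -/
def HomOrthogonal (M N : Mdl Λ) : Prop :=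
  (∀ f : M.carrier →ₗ[Λ] N.carrier, f = 0) ∧ ∀ f : N.carrier →ₗ[Λ] M.carrier, f = 0

section helpers
variable {Λ}

theorem filt_factor {S : Set (Mdl Λ)} (hS : ∀ M ∈ S, ∀ N : Mdl Λ, IsFactor Λ M N → N ∈ S)
    {M : Mdl Λ} (h : Filt Λ S M) : ∀ Q : Mdl Λ, IsFactor Λ M Q → Filt Λ S Q := by
  induction h with
  | of_subsingleton M h =>
    rintro Q ⟨f, hf⟩
    exact Filt.of_subsingleton Q hf.subsingleton
  | step M N X hX hN e ih =>
    rintro Q ⟨f, hf⟩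
    obtain ⟨e⟩ := e
    have h1 : Filt Λ S (Mdl.of Λ (N.map f)) := by
      apply ih
      refine ⟨(f.submoduleMap N : N →ₗ[Λ] N.map f), f.submoduleMap_surjective N⟩
    refine Filt.step Q (N.map f) (Mdl.of Λ (Q.carrier ⧸ N.map f)) ?_ h1 ⟨LinearEquiv.refl _ _⟩
    refine hS X hX _ ⟨(N.mapQ (N.map f) f (Submodule.le_comap_map f N)).comp
      e.symm.toLinearMap, ?_⟩
    have h2 : Function.Surjective (N.mapQ (N.map f) f (Submodule.le_comap_map f N)) := by
      intro y
      obtain ⟨y, rfl⟩ := Submodule.Quotient.mk_surjective _ y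
      obtain ⟨x, rfl⟩ := hf y
      exact ⟨Submodule.Quotient.mk x, rfl⟩
    exact h2.comp e.symm.surjective

theorem filt_ext {S : Set (Mdl Λ)} (hS : ∀ M ∈ S, ∀ N : Mdl Λ, IsFactor Λ M N → N ∈ S)
    {A : Mdl Λ} (hA : Filt Λ S A)
    {B : Mdl Λ} (h : Filt Λ S B) : ∀ M : Mdl Λ, ExtOf Λ M A B → Filt Λ S M := by
  induction h with
  | of_subsingleton B h =>
    rintro M ⟨f, g, hf, hg, hfg⟩
    refine filt_factor hS hA M ⟨f, ?_⟩
    rw [← LinearMap.range_eq_top, hfg, eq_top_iff]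
    intro x _
    exact Subsingleton.elim _ _
  | step B N X hX hN e ih =>
    rintro M ⟨f, g, hf, hg, hfg⟩
    obtain ⟨e⟩ := e
    have hfz : ∀ a, g (f a) = 0 := fun a => by
      have : f a ∈ LinearMap.ker g := hfg ▸ LinearMap.mem_range_self f a
      exact this
    have h1 : Filt Λ S (Mdl.of Λ (N.comap g)) := by
      apply ih
      refine ⟨(f.codRestrict (N.comap g) (fun a => by simp [hfz a]) : A.carrier →ₗ[Λ] N.comap g),
        (g.restrict (fun x hx => hx) : N.comap g →ₗ[Λ] N), ?_, ?_, ?_⟩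
      · intro a b hab
        exact hf (congrArg Subtype.val hab)
      · rintro ⟨y, hy⟩
        obtain ⟨x, rfl⟩ := hg y
        exact ⟨⟨x, hy⟩, rfl⟩
      · ext ⟨x, hx⟩
        constructor
        · rintro ⟨a, ha⟩
          have ha : f a = x := congrArg Subtype.val ha
          apply Subtype.ext
          change g x = 0
          rw [← ha, hfz]
        · intro hx'
          have : g x = 0 := congrArg Subtype.val hx'
          have : x ∈ LinearMap.range f := hfg ▸ this
          obtain ⟨a, ha⟩ := this
          exact ⟨a, Subtype.ext ha⟩
    refine Filt.step M (N.comap g) X hX h1 ⟨?_⟩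
    refine (LinearEquiv.ofBijective ((N.comap g).mapQ N g le_rfl) ⟨?_, ?_⟩).trans e
    · rw [← LinearMap.ker_eq_bot, LinearMap.ker_eq_bot']
      intro x hx
      obtain ⟨x, rfl⟩ := Submodule.Quotient.mk_surjective _ x
      have : (Submodule.Quotient.mk (g x) : B.carrier ⧸ N) = 0 := hx
      rw [Submodule.Quotient.mk_eq_zero] at this ⊢
      exact this
    · intro y
      obtain ⟨y, rfl⟩ := Submodule.Quotient.mk_surjective _ y
      obtain ⟨x, rfl⟩ := hg y
      exact ⟨Submodule.Quotient.mk x, rfl⟩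

theorem filt_fin {S : Set (Mdl Λ)} (hS : ∀ M ∈ S, Module.Finite Λ M.carrier)
    {M : Mdl Λ} (h : Filt Λ S M) : Module.Finite Λ M.carrier := by
  induction h with
  | of_subsingleton M h => infer_instance
  | step M N X hX hN e ih =>
    obtain ⟨e⟩ := e
    have := hS X hX
    have : Module.Finite Λ (M.carrier ⧸ N) := Module.Finite.equiv e.symm
    have : Module.Finite Λ N := ih
    exact Module.Finite.of_submodule_quotient N

theorem gen_factor (M : Mdl Λ) : ∀ X ∈ GenSet Λ M, ∀ N : Mdl Λ, IsFactor Λ X N → N ∈ GenSet Λ M := by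
  rintro X ⟨n, f, hf⟩ N ⟨g, hg⟩
  exact ⟨n, g.comp f, hg.comp hf⟩

theorem tors_filtGen (M : Mdl Λ) [Module.Finite Λ M.carrier] :
    IsTorsionClass Λ (FiltSet Λ (GenSet Λ M)) where
  fin := fun X hX => filt_fin (by
    rintro Y ⟨n, f, hf⟩
    exact Module.Finite.of_surjective f hf) hX
  zero_mem := fun X h => Filt.of_subsingleton X h
  iso_closed := fun X hX N ⟨e⟩ => filt_factor (gen_factor M) hX N ⟨e.toLinearMap, e.surjective⟩
  factor_closed := fun X hX => filt_factor (gen_factor M) hX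
  ext_closed := fun A hA B hB => filt_ext (gen_factor M) hA hB

theorem mem_filtGen (M : Mdl Λ) : M ∈ FiltSet Λ (GenSet Λ M) := by
  refine Filt.step M ⊥ M ⟨1, LinearMap.proj 0, ?_⟩ (Filt.of_subsingleton _ ?_)
    ⟨Submodule.quotEquivOfEqBot ⊥ rfl⟩
  · intro x; exact ⟨fun _ => x, rfl⟩
  · change Subsingleton (⊥ : Submodule Λ M.carrier); infer_instance

theorem tors_pow_mem {T : Set (Mdl Λ)} (hT : IsTorsionClass Λ T) {M : Mdl Λ} (hM : M ∈ T) (n : ℕ) :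
    Mdl.of Λ (Fin n → M.carrier) ∈ T := by
  induction n with
  | zero =>
    apply hT.zero_mem
    change Subsingleton (Fin 0 → M.carrier)
    infer_instance
  | succ n ih =>
    refine hT.ext_closed _ hM _ ih _ ⟨(LinearMap.single Λ (fun _ : Fin (n+1) => M.carrier) 0 :
      M.carrier →ₗ[Λ] (Fin (n+1) → M.carrier)), (LinearMap.funLeft Λ M.carrier Fin.succ :
      (Fin (n+1) → M.carrier) →ₗ[Λ] (Fin n → M.carrier)), ?_, ?_, ?_⟩
    · exact Pi.single_injective (M := fun _ : Fin (n+1) => M.carrier) 0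
    · exact LinearMap.funLeft_surjective_of_injective _ _ _ (Fin.succ_injective n)
    · ext x
      constructor
      · rintro ⟨a, rfl⟩
        change (fun i : Fin n => (Pi.single 0 a : Fin (n+1) → M.carrier) i.succ) = 0
        funext i
        simp
      · intro hx
        have hx : (fun i : Fin n => (x : Fin (n+1) → M.carrier) i.succ) = 0 := hx
        refine ⟨(x : Fin (n+1) → M.carrier) 0, ?_⟩
        change (Pi.single 0 ((x : Fin (n+1) → M.carrier) 0) : Fin (n+1) → M.carrier) = x
        funext i
        refine Fin.cases ?_ (fun i => ?_) i
        · simp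
        · simpa using (congrFun hx i).symm

theorem filt_le {T : Set (Mdl Λ)} (hT : IsTorsionClass Λ T) {M : Mdl Λ} (hM : M ∈ T) :
    FiltSet Λ (GenSet Λ M) ⊆ T := by
  intro X hX
  have hX : Filt Λ (GenSet Λ M) X := hX
  induction hX with
  | of_subsingleton X h => exact hT.zero_mem X h
  | step X N Y hY hN e ih =>
    obtain ⟨e⟩ := e
    obtain ⟨n, f, hf⟩ := hY
    have hYT : Y ∈ T := hT.factor_closed _ (tors_pow_mem hT hM n) _ ⟨f, hf⟩
    refine hT.ext_closed _ (ih hN) _ hYT X ⟨(N.subtype : N →ₗ[Λ] X.carrier),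
      e.toLinearMap.comp N.mkQ, N.injective_subtype,
      e.surjective.comp N.mkQ_surjective, ?_⟩
    rw [LinearEquiv.ker_comp, Submodule.ker_mkQ]
    exact N.range_subtype

theorem filt_hom {M X : Mdl Λ} (h : Filt Λ (GenSet Λ M) X) :
    (∀ f : M.carrier →ₗ[Λ] X.carrier, f = 0) → Subsingleton X.carrier := by
  induction h with
  | of_subsingleton X h => exact fun _ => h
  | step X N Y hY hN e ih =>
    intro H
    obtain ⟨e⟩ := e
    obtain ⟨n, f, hf⟩ := hY
    have h1 : Subsingleton N := ih (fun (g : M.carrier →ₗ[Λ] N) => by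
      have := H (N.subtype.comp g)
      ext x
      exact congrArg (fun l => l x) this)
    have h2 : N = ⊥ := (Submodule.subsingleton_iff_eq_bot).1 h1
    let e' : Y.carrier ≃ₗ[Λ] X.carrier := e.symm.trans (Submodule.quotEquivOfEqBot N h2)
    have h3 : e'.toLinearMap.comp f = 0 := by
      apply LinearMap.pi_ext'
      intro i
      rw [H ((e'.toLinearMap.comp f).comp _)]
      simp
    refine subsingleton_of_forall_eq 0 (fun x => ?_)
    obtain ⟨y, rfl⟩ := e'.surjective x
    obtain ⟨z, rfl⟩ := hf y
    exact congrArg (fun l => l z) h3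

/-- key: nonzero maps from modules of `T(M)` to brick `M` are onto. -/
theorem brick_surj {M : Mdl Λ} (hM : IsBrick Λ M) {N : Mdl Λ}
    (hN : N ∈ FiltSet Λ (GenSet Λ M)) (f : N.carrier →ₗ[Λ] M.carrier) (hf : f ≠ 0) :
    Function.Surjective f := by
  obtain ⟨hfin, hnt, hb⟩ := hM
  have hI : Filt Λ (GenSet Λ M) (Mdl.of Λ (LinearMap.range f)) :=
    (tors_filtGen M).factor_closed N hN _ ⟨(f.rangeRestrict : N.carrier →ₗ[Λ] LinearMap.range f),
      f.surjective_rangeRestrict⟩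
  by_contra hs
  apply hf
  have : Subsingleton (LinearMap.range f) := by
    refine filt_hom hI (fun (g : M.carrier →ₗ[Λ] LinearMap.range f) => ?_)
    by_contra hg
    have h1 : (LinearMap.range f).subtype.comp g ≠ 0 := by
      intro h0
      apply hg
      ext x
      exact congrArg (fun l => l x) h0
    apply hs
    intro m
    obtain ⟨x, hx⟩ := (hb _ h1).2 m
    rw [← hx]
    exact (g x).2
  exact LinearMap.range_eq_bot.1 ((Submodule.subsingleton_iff_eq_bot).1 this)

theorem tors_leftPerp (M : Mdl Λ) :
    IsTorsionClass Λ {X : Mdl Λ | Module.Finite Λ X.carrier ∧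
      ∀ f : X.carrier →ₗ[Λ] M.carrier, f = 0} := by
  have hfac : ∀ X ∈ {X : Mdl Λ | Module.Finite Λ X.carrier ∧
      ∀ f : X.carrier →ₗ[Λ] M.carrier, f = 0}, ∀ N : Mdl Λ, IsFactor Λ X N →
      N ∈ {X : Mdl Λ | Module.Finite Λ X.carrier ∧
      ∀ f : X.carrier →ₗ[Λ] M.carrier, f = 0} := by
    rintro X ⟨h1, h2⟩ N ⟨g, hg⟩
    refine ⟨Module.Finite.of_surjective g hg, fun f => ?_⟩
    ext y
    obtain ⟨x, rfl⟩ := hg y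
    exact congrArg (fun l => l x) (h2 (f.comp g))
  refine ⟨fun X h => h.1, ?_, ?_, hfac, ?_⟩
  · intro X h
    refine ⟨inferInstance, fun f => ?_⟩
    ext x
    rw [Subsingleton.elim x 0]; simp
  · rintro X hX N ⟨e⟩
    exact hfac X hX N ⟨e.toLinearMap, e.surjective⟩
  · rintro A ⟨hA1, hA2⟩ B ⟨hB1, hB2⟩ X ⟨i, p, hi, hp, hip⟩
    refine ⟨?_, fun f => ?_⟩
    · have h1 : Module.Finite Λ (LinearMap.ker p) := by
        rw [← hip]; infer_instance
      have h2 : Module.Finite Λ (X.carrier ⧸ LinearMap.ker p) :=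
        Module.Finite.equiv (p.quotKerEquivOfSurjective hp).symm
      exact Module.Finite.of_submodule_quotient (LinearMap.ker p)
    · have h0 : LinearMap.ker p ≤ LinearMap.ker f := by
        rw [← hip]
        rintro _ ⟨a, rfl⟩
        exact congrArg (fun l => l a) (hA2 (f.comp i))
      have h1 := hB2 (((LinearMap.ker p).liftQ f h0).comp
        (p.quotKerEquivOfSurjective hp).symm.toLinearMap)
      ext x
      have h2 := congrArg (fun l => l (p x)) h1
      have h3 : (p.quotKerEquivOfSurjective hp).symm (p x) = Submodule.Quotient.mk x := by
        rw [LinearEquiv.symm_apply_eq]; rfl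
      simpa [h3] using h2

theorem quot_mem [IsArtinianRing Λ] {T U : Set (Mdl Λ)} (hT : IsTorsionClass Λ T)
    (hU : IsTorsionClass Λ U) (hB : ∀ B ∈ T, IsBrick Λ B → B ∈ U) : T ⊆ U := by
  intro X hX
  have hfin := hT.fin X hX
  have key : ∀ N : Submodule Λ X.carrier, Mdl.of Λ (X.carrier ⧸ N) ∈ U := by
    intro N
    induction N using IsNoetherian.induction with
    | hgt N ih =>
    by_contra hN
    have hprop : ∀ (J : Submodule Λ (X.carrier ⧸ N)), J ≠ ⊥ →
        Mdl.of Λ ((X.carrier ⧸ N) ⧸ J) ∈ U := by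
      intro J hJ
      have hlt : N < J.comap N.mkQ := by
        refine lt_of_le_of_ne (Submodule.le_comap_mkQ N J) (fun h => hJ ?_)
        rw [← Submodule.map_comap_eq_of_surjective N.mkQ_surjective J, ← h,
          Submodule.mkQ_map_self]
      refine hU.factor_closed _ (ih _ hlt) _
        ⟨(((J.comap N.mkQ).liftQ (J.mkQ.comp N.mkQ) ?_) :
          (X.carrier ⧸ (J.comap N.mkQ)) →ₗ[Λ] ((X.carrier ⧸ N) ⧸ J)), ?_⟩
      · rw [LinearMap.ker_comp, Submodule.ker_mkQ]
      · intro y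
        obtain ⟨y, rfl⟩ := Submodule.Quotient.mk_surjective _ y
        obtain ⟨y, rfl⟩ := Submodule.Quotient.mk_surjective _ y
        exact ⟨Submodule.Quotient.mk y, rfl⟩
    apply hN
    apply hB
    · exact hT.factor_closed X hX _ ⟨(N.mkQ : X.carrier →ₗ[Λ] (X.carrier ⧸ N)), N.mkQ_surjective⟩
    · refine ⟨?_, ?_, ?_⟩
      · change Module.Finite Λ (X.carrier ⧸ N); infer_instance
      · by_contra hnt
        exact hN (hU.zero_mem _ (not_nontrivial_iff_subsingleton.1 hnt))
      · suffices hh : ∀ f : (X.carrier ⧸ N) →ₗ[Λ] (X.carrier ⧸ N), f ≠ 0 →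
            Function.Bijective f from hh
        intro f hf
        have hinj : Function.Injective f := by
          by_contra hni
          have hk : LinearMap.ker f ≠ ⊥ := fun h => hni (LinearMap.ker_eq_bot.1 h)
          have hr : LinearMap.range f ≠ ⊥ := fun h => hf (LinearMap.range_eq_bot.1 h)
          have h1 : Mdl.of Λ (LinearMap.range f) ∈ U :=
            hU.iso_closed _ (hprop _ hk) _ ⟨(f.quotKerEquivRange :
              ((X.carrier ⧸ N) ⧸ LinearMap.ker f) ≃ₗ[Λ] LinearMap.range f)⟩
          refine hN (hU.ext_closed _ h1 _ (hprop _ hr) _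
            ⟨((LinearMap.range f).subtype : LinearMap.range f →ₗ[Λ] (X.carrier ⧸ N)),
            ((LinearMap.range f).mkQ : (X.carrier ⧸ N) →ₗ[Λ] _),
            (LinearMap.range f).injective_subtype, (LinearMap.range f).mkQ_surjective, ?_⟩)
          exact (LinearMap.range f).range_subtype.trans (LinearMap.range f).ker_mkQ.symm
        exact IsArtinian.bijective_of_injective_endomorphism f hinj
  exact hU.iso_closed _ (key ⊥) X ⟨(Submodule.quotEquivOfEqBot ⊥ rfl :
    (X.carrier ⧸ (⊥ : Submodule Λ X.carrier)) ≃ₗ[Λ] X.carrier)⟩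

theorem le_torsJoin (A : Set (Set (Mdl Λ))) {S : Set (Mdl Λ)} (hS : S ∈ A) : S ⊆ TorsJoin Λ A :=
  fun _ hx _ hT => hT.2 S hS hx

end helpers

/-- The map `ζ : [M] ↦ Filt(Gen(M))` is a bijection from the set of
isomorphism classes of bricks over `Λ` onto the set of completely join-irreducible
elements of `tors Λ`: it is well defined on isomorphism classes, lands in the completely
join-irreducible torsion classes, is injective up to isomorphism, and is surjective. -/
theorem statement2 (k : Type) [Field k] (Λ : Type) [Ring Λ] [Algebra k Λ]
    [FiniteDimensional k Λ] :
    (∀ M : Mdl Λ, IsBrick Λ M → CompletelyJoinIrred Λ (FiltSet Λ (GenSet Λ M))) ∧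
    (∀ M M' : Mdl Λ, IsBrick Λ M → IsBrick Λ M' → MIso Λ M M' →
      FiltSet Λ (GenSet Λ M) = FiltSet Λ (GenSet Λ M')) ∧
    (∀ M M' : Mdl Λ, IsBrick Λ M → IsBrick Λ M' →
      FiltSet Λ (GenSet Λ M) = FiltSet Λ (GenSet Λ M') → MIso Λ M M') ∧
    (∀ T : Set (Mdl Λ), CompletelyJoinIrred Λ T →
      ∃ M : Mdl Λ, IsBrick Λ M ∧ T = FiltSet Λ (GenSet Λ M)) := by
  refine ⟨?_, ?_, ?_, ?_⟩
  · intro M hM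
    have hfin := hM.1
    refine ⟨tors_filtGen M, fun A hA hJ => ?_⟩
    by_contra hn
    have hno : ∀ S ∈ A, M ∉ S := by
      intro S hS hMS
      have h1 : S ⊆ FiltSet Λ (GenSet Λ M) := hJ ▸ le_torsJoin A hS
      have h2 := filt_le (hA S hS) hMS
      exact hn (Set.Subset.antisymm h1 h2 ▸ hS)
    have hle : FiltSet Λ (GenSet Λ M) ⊆ {X : Mdl Λ | Module.Finite Λ X.carrier ∧
        ∀ f : X.carrier →ₗ[Λ] M.carrier, f = 0} := by
      rw [← hJ]
      intro X hX
      refine hX _ ⟨tors_leftPerp M, fun S hS Y hY => ⟨(hA S hS).fin Y hY, fun f => ?_⟩⟩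
      by_contra hf
      have hYM : Y ∈ FiltSet Λ (GenSet Λ M) := hJ ▸ le_torsJoin A hS hY
      exact hno S hS ((hA S hS).factor_closed Y hY M ⟨f, brick_surj hM hYM f hf⟩)
    have h0 := (hle (mem_filtGen M)).2 LinearMap.id
    have := hM.2.1
    obtain ⟨x, hx⟩ := exists_ne (0 : M.carrier)
    exact hx (congrArg (fun l => l x) h0)
  · intro M M' hM hM' hi
    have := hM.1
    have := hM'.1
    obtain ⟨e⟩ := hi
    apply Set.Subset.antisymm
    · exact filt_le (tors_filtGen M')
        ((tors_filtGen M').iso_closed _ (mem_filtGen M') _ ⟨e.symm⟩)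
    · exact filt_le (tors_filtGen M) ((tors_filtGen M).iso_closed _ (mem_filtGen M) _ ⟨e⟩)
  · have aux : ∀ M M' : Mdl Λ, IsBrick Λ M → IsBrick Λ M' →
        FiltSet Λ (GenSet Λ M) = FiltSet Λ (GenSet Λ M') →
        ∃ f : M.carrier →ₗ[Λ] M'.carrier, Function.Surjective f := by
      intro M M' hM hM' h
      have hm : M' ∈ FiltSet Λ (GenSet Λ M) := h ▸ mem_filtGen M'
      have hm' : M ∈ FiltSet Λ (GenSet Λ M') := h ▸ mem_filtGen M
      by_contra hc
      have hz : ∀ f : M.carrier →ₗ[Λ] M'.carrier, f = 0 := by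
        intro f
        by_contra hf
        exact hc ⟨f, brick_surj hM' hm' f hf⟩
      have := hM'.2.1
      exact not_subsingleton _ (filt_hom hm hz)
    intro M M' hM hM' h
    obtain ⟨f, hf⟩ := aux M M' hM hM' h
    obtain ⟨g, hg⟩ := aux M' M hM' hM h.symm
    have hgf : Function.Surjective (g.comp f) := hg.comp hf
    have hne : g.comp f ≠ 0 := by
      intro h0
      have := hM.2.1
      obtain ⟨x, hx⟩ := exists_ne (0 : M.carrier)
      obtain ⟨y, rfl⟩ := hgf x
      exact hx (congrArg (fun l => l y) h0)
    have hinj : Function.Injective (g ∘ f) := (hM.2.2 _ hne).1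
    exact ⟨LinearEquiv.ofBijective f ⟨hinj.of_comp, hf⟩⟩
  · rintro T ⟨hT, hJ⟩
    have : IsArtinianRing Λ := IsArtinianRing.of_finite k Λ
    have := hJ {S | ∃ B ∈ T, IsBrick Λ B ∧ S = FiltSet Λ (GenSet Λ B)} (by
      rintro _ ⟨B, _, hB, rfl⟩
      have := hB.1
      exact tors_filtGen B) (by
      apply Set.Subset.antisymm
      · intro X hX
        refine hX T ⟨hT, ?_⟩
        rintro _ ⟨B, hBT, hB, rfl⟩
        exact filt_le hT hBT
      · intro X hX U hU
        refine quot_mem hT hU.1 (fun B hBT hB => ?_) hX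
        exact hU.2 _ ⟨B, hBT, hB, rfl⟩ (mem_filtGen B))
    obtain ⟨B, _, hB, h⟩ := this
    exact ⟨B, hB, h⟩
end

section
/- Let S be a class of indecomposable modules in mod Λ that is closed under taking indecomposable direct summands of factor modules. Then Filt(S) is closed under taking factor modules. Dually, if S is closed under taking indecomposable direct summands of submodules, then Filt(S) is closed under taking submodules. -/
variable (Λ : Type) [Ring Λ]

theorem filt_iso {Λ : Type} [Ring Λ] {S : Set (Mdl Λ)} {M : Mdl Λ} (h : Filt Λ S M) :
    ∀ M' : Mdl Λ, (M.carrier ≃ₗ[Λ] M'.carrier) → Filt Λ S M' := by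
  induction h with
  | of_subsingleton M h =>
    intro M' e
    exact Filt.of_subsingleton M' e.symm.toEquiv.subsingleton
  | step M N X hX hN e ih =>
    intro M' e'
    obtain ⟨e⟩ := e
    refine Filt.step M' (N.map e'.toLinearMap) X hX (ih _ (e'.submoduleMap N)) ⟨?_⟩
    exact (Submodule.Quotient.equiv N (N.map e'.toLinearMap) e' rfl).symm.trans e

theorem filt_ext_s5 {Λ : Type} [Ring Λ] {S : Set (Mdl Λ)} {B : Mdl Λ} (h : Filt Λ S B) :
    ∀ (A M : Mdl Λ) (f : A.carrier →ₗ[Λ] M.carrier) (g : M.carrier →ₗ[Λ] B.carrier),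
      Filt Λ S A → Function.Injective f → Function.Surjective g →
      LinearMap.range f = LinearMap.ker g → Filt Λ S M := by
  induction h with
  | of_subsingleton B h =>
    intro A M f g hA hf hg hfg
    refine filt_iso hA M (LinearEquiv.ofBijective f ⟨hf, ?_⟩)
    rw [← LinearMap.range_eq_top, hfg, eq_top_iff]
    intro x _
    exact Subsingleton.elim _ _
  | step B N X hX hN e ih =>
    intro A M f g hA hf hg hfg
    obtain ⟨e⟩ := e
    have hfN : ∀ a, f a ∈ N.comap g := by
      intro a
      have : f a ∈ LinearMap.ker g := hfg ▸ LinearMap.mem_range_self f a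
      rw [LinearMap.mem_ker] at this
      simp [this]
    have hk : N.comap g = LinearMap.ker (e.toLinearMap ∘ₗ N.mkQ ∘ₗ g) := by
      ext x; simp
    refine Filt.step M (N.comap g) X hX
      (ih A (Mdl.of Λ (N.comap g)) (f.codRestrict (N.comap g) hfN)
        (g.restrict (p := N.comap g) (q := N) (fun x hx => hx)) hA ?_ ?_ ?_) ⟨?_⟩
    · intro x y hxy
      exact hf (congrArg Subtype.val hxy)
    · rintro ⟨y, hy⟩
      obtain ⟨x, rfl⟩ := hg y
      exact ⟨⟨x, hy⟩, rfl⟩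
    · ext ⟨x, hx⟩
      have := SetLike.ext_iff.1 hfg x
      rw [LinearMap.mem_range, LinearMap.mem_ker] at this
      constructor
      · rintro ⟨a, ha⟩
        exact Subtype.ext (this.1 ⟨a, congrArg Subtype.val ha⟩)
      · intro h
        obtain ⟨a, ha⟩ := this.2 (congrArg Subtype.val h)
        exact ⟨a, Subtype.ext ha⟩
    · refine (Submodule.quotEquivOfEq _ _ hk).trans (LinearMap.quotKerEquivOfSurjective _ ?_)
      exact e.surjective.comp (N.mkQ_surjective.comp hg)

theorem summand_trans {Λ : Type} [Ring Λ] {A B C : Mdl Λ} (h : IsSummand Λ A B)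
    (h' : IsSummand Λ B C) : IsSummand Λ A C := by
  obtain ⟨i, p, h⟩ := h
  obtain ⟨j, q, h'⟩ := h'
  refine ⟨j ∘ₗ i, p ∘ₗ q, ?_⟩
  ext x
  have h1 := LinearMap.congr_fun h' (i x)
  have h2 := LinearMap.congr_fun h x
  simp at h1 h2 ⊢
  rw [h1, h2]

theorem summand_of_compl {Λ : Type} [Ring Λ] {M : Mdl Λ} {p q : Submodule Λ M.carrier}
    (h : IsCompl p q) : IsSummand Λ (Mdl.of Λ p) M :=
  ⟨p.subtype, p.projectionOnto q h, by
    exact LinearMap.ext fun x => Submodule.projectionOnto_apply_left h x⟩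

theorem summand_iso {Λ : Type} [Ring Λ] {A B : Mdl Λ} (e : A.carrier ≃ₗ[Λ] B.carrier) :
    IsSummand Λ A B :=
  ⟨e, e.symm, by ext x; simp⟩

theorem filt_of_mem {Λ : Type} [Ring Λ] {S : Set (Mdl Λ)} {X : Mdl Λ} (h : X ∈ S) :
    Filt Λ S X :=
  Filt.step X ⊥ X h (Filt.of_subsingleton _ (inferInstanceAs (Subsingleton (⊥ : Submodule Λ X.carrier))))
    ⟨Submodule.quotEquivOfEqBot ⊥ rfl⟩

theorem filt_decomp {Λ : Type} [Ring Λ] {S : Set (Mdl Λ)} (M : Mdl Λ)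
    [IsArtinian Λ M.carrier]
    (h : ∀ D, IsSummand Λ D M → Indec Λ D → D ∈ S) : Filt Λ S M := by
  have key : ∀ D : Submodule Λ M.carrier, IsSummand Λ (Mdl.of Λ D) M →
      Filt Λ S (Mdl.of Λ D) := by
    intro D
    induction D using WellFoundedLT.induction with
    | ind D ih =>
      intro hD
      by_cases hs : Subsingleton D
      · exact Filt.of_subsingleton _ hs
      by_cases hi : Indec Λ (Mdl.of Λ D)
      · exact filt_of_mem (h _ hD hi)
      have hn : Nontrivial D := not_subsingleton_iff_nontrivial.1 hs
      have : ¬ ∀ p q : Submodule Λ D, IsCompl p q → p = ⊥ ∨ q = ⊥ := fun h => hi ⟨hn, h⟩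
      push Not at this
      obtain ⟨p, q, hpq, hp, hq⟩ := this
      have aux : ∀ p q : Submodule Λ D, IsCompl p q → q ≠ ⊥ → Filt Λ S (Mdl.of Λ p) := by
        intro p q hpq hq
        have e : p ≃ₗ[Λ] p.map D.subtype :=
          Submodule.equivMapOfInjective D.subtype D.injective_subtype p
        have hlt : p.map D.subtype < D := by
          refine lt_of_le_of_ne (Submodule.map_subtype_le D p) ?_
          intro heq
          have hp : p = ⊤ := by
            apply Submodule.map_injective_of_injective D.injective_subtype
            rw [heq]; simp
          subst hp
          exact hq (by simpa using hpq.inf_eq_bot)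
        refine filt_iso (ih _ hlt ?_) (Mdl.of Λ p) e.symm
        exact summand_trans (summand_iso (A := Mdl.of Λ (p.map D.subtype)) (B := Mdl.of Λ p) e.symm)
          (summand_trans (summand_of_compl (M := Mdl.of Λ D) hpq) hD)
      have fp := aux p q hpq hq
      have fq := aux q p hpq.symm hp
      exact filt_ext_s5 fq (Mdl.of Λ p) (Mdl.of Λ D) p.subtype (q.projectionOnto p hpq.symm) fp
        p.injective_subtype (Submodule.projectionOnto_surjective hpq.symm)
        ((Submodule.range_subtype p).trans (Submodule.ker_projectionOnto hpq.symm).symm)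
  exact filt_iso (key ⊤ (summand_iso (A := Mdl.of Λ _) Submodule.topEquiv)) M Submodule.topEquiv

/-- Let `S` be a class of indecomposable modules in `mod Λ`.
If `S` is closed under taking indecomposable direct summands of factor modules,
then `Filt(S)` is closed under factor modules. Dually, if `S` is closed under taking
indecomposable direct summands of submodules, then `Filt(S)` is closed under submodules. -/
theorem statement5 (k : Type) [Field k] (Λ : Type) [Ring Λ] [Algebra k Λ]
    [FiniteDimensional k Λ] (S : Set (Mdl Λ))
    (hS : ∀ M ∈ S, Module.Finite Λ M.carrier ∧ Indec Λ M) :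
    ((∀ M ∈ S, ∀ N D : Mdl Λ, IsFactor Λ M N → IsSummand Λ D N → Indec Λ D → D ∈ S) →
      ∀ M ∈ FiltSet Λ S, ∀ N : Mdl Λ, IsFactor Λ M N → N ∈ FiltSet Λ S) ∧
    ((∀ M ∈ S, ∀ N D : Mdl Λ, IsSubmoduleOf Λ N M → IsSummand Λ D N → Indec Λ D → D ∈ S) →
      ∀ M ∈ FiltSet Λ S, ∀ N : Mdl Λ, IsSubmoduleOf Λ N M → N ∈ FiltSet Λ S) := by
  have : IsArtinianRing Λ := IsArtinianRing.of_finite k Λ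
  constructor
  · intro hcl M hM
    induction hM with
    | of_subsingleton M h =>
      rintro N ⟨f, hf⟩
      exact Filt.of_subsingleton _ hf.subsingleton
    | step M A X hX hA e ih =>
      rintro N ⟨f, hf⟩
      obtain ⟨e⟩ := e
      have hfin := (hS X hX).1
      have h1 : Filt Λ S (Mdl.of Λ (A.map f)) := ih _ ⟨f.submoduleMap A, f.submoduleMap_surjective A⟩
      let π : X.carrier →ₗ[Λ] (N.carrier ⧸ A.map f) :=
        (A.mapQ (A.map f) f (Submodule.le_comap_map f A)) ∘ₗ e.symm.toLinearMap
      have hπ : Function.Surjective π := by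
        intro y
        obtain ⟨y, rfl⟩ := Submodule.mkQ_surjective _ y
        obtain ⟨x, rfl⟩ := hf y
        exact ⟨e (A.mkQ x), by simp [π]⟩
      have : IsArtinian Λ (Mdl.of Λ (N.carrier ⧸ A.map f)).carrier :=
        isArtinian_of_surjective _ π hπ
      have h2 : Filt Λ S (Mdl.of Λ (N.carrier ⧸ A.map f)) :=
        filt_decomp _ (fun D hD hi => hcl X hX _ D ⟨π, hπ⟩ hD hi)
      exact filt_ext_s5 h2 _ N (A.map f).subtype (A.map f).mkQ h1 (Submodule.injective_subtype _)
        (Submodule.mkQ_surjective _) ((Submodule.range_subtype _).trans (Submodule.ker_mkQ _).symm)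
  · intro hcl M hM
    induction hM with
    | of_subsingleton M h =>
      rintro N ⟨f, hf⟩
      exact Filt.of_subsingleton _ hf.subsingleton
    | step M A X hX hA e ih =>
      rintro N ⟨f, hf⟩
      obtain ⟨e⟩ := e
      have hfin := (hS X hX).1
      have h1 : Filt Λ S (Mdl.of Λ (A.comap f)) :=
        ih _ ⟨f.restrict (p := A.comap f) (q := A) (fun x hx => hx), by
          intro x y hxy
          exact Subtype.ext (hf (congrArg Subtype.val hxy))⟩
      let π : (N.carrier ⧸ A.comap f) →ₗ[Λ] X.carrier :=
        e.toLinearMap ∘ₗ ((A.comap f).mapQ A f le_rfl)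
      have hπ : Function.Injective π := by
        have h0 : Function.Injective ((A.comap f).mapQ A f le_rfl) := by
          rw [← LinearMap.ker_eq_bot, Submodule.ker_mapQ]
          exact Submodule.mkQ_map_self _
        intro x y hxy
        exact h0 (e.injective hxy)
      have : IsArtinian Λ (Mdl.of Λ (N.carrier ⧸ A.comap f)).carrier :=
        isArtinian_of_injective π hπ
      have h2 : Filt Λ S (Mdl.of Λ (N.carrier ⧸ A.comap f)) :=
        filt_decomp _ (fun D hD hi => hcl X hX _ D ⟨π, hπ⟩ hD hi)
      exact filt_ext_s5 h2 _ N (A.comap f).subtype (A.comap f).mkQ h1 (Submodule.injective_subtype _)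
        (Submodule.mkQ_surjective _) ((Submodule.range_subtype _).trans (Submodule.ker_mkQ _).symm)
end

section
/- Let T be a torsion class in mod Λ and M an indecomposable module not in T such that every proper factor of M belongs to T. Let N be a module in Filt(T ∪ {M}) but not in T such that every proper factor of N lies in T. If Filt(T ∪ {M}) covers T in tors Λ, then N is isomorphic to M. -/
variable (Λ : Type) [Ring Λ]

/-- Minimal non-torsion modules are torsion-free. -/
theorem aux_torsionfree (Λ : Type) [Ring Λ] (T : Set (Mdl Λ)) (hT : IsTorsionClass Λ T)
    (M : Mdl Λ) (hM : M ∉ T) (hMfac : ∀ N : Mdl Λ, IsProperFactor Λ M N → N ∈ T)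
    (A : Mdl Λ) (hA : A ∈ T) (h : A.carrier →ₗ[Λ] M.carrier) : h = 0 := by
  by_contra hne
  apply hM
  have h1 : Mdl.of Λ (LinearMap.range h) ∈ T :=
    hT.factor_closed A hA _ ⟨h.rangeRestrict, LinearMap.surjective_rangeRestrict h⟩
  have h2 : Mdl.of Λ (M.carrier ⧸ LinearMap.range h) ∈ T := by
    apply hMfac
    refine ⟨(LinearMap.range h).mkQ, Submodule.mkQ_surjective _, fun hinj => hne ?_⟩
    have h3 : LinearMap.ker (LinearMap.range h).mkQ = ⊥ := LinearMap.ker_eq_bot.mpr hinj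
    exact LinearMap.range_eq_bot.mp ((Submodule.ker_mkQ _).symm.trans h3)
  exact hT.ext_closed _ h1 _ h2 M ⟨(LinearMap.range h).subtype, (LinearMap.range h).mkQ,
    Submodule.injective_subtype _, Submodule.mkQ_surjective _,
    (Submodule.range_subtype (LinearMap.range h)).trans (Submodule.ker_mkQ _).symm⟩

/-- Nonzero maps from a minimal non-torsion module to a torsion-free one are injective. -/
theorem aux_injective (Λ : Type) [Ring Λ] (T : Set (Mdl Λ))
    (M : Mdl Λ) (hMfac : ∀ N : Mdl Λ, IsProperFactor Λ M N → N ∈ T)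
    (Z : Mdl Λ) (hZ : ∀ A ∈ T, ∀ h : A.carrier →ₗ[Λ] Z.carrier, h = 0)
    (f : M.carrier →ₗ[Λ] Z.carrier) (hf : f ≠ 0) : Function.Injective f := by
  by_contra hinj
  have h1 : Mdl.of Λ (LinearMap.range f) ∈ T := by
    apply hMfac
    refine ⟨f.rangeRestrict, LinearMap.surjective_rangeRestrict f, fun hi => hinj ?_⟩
    intro x y hxy
    exact hi (Subtype.ext hxy)
  have h2 := hZ _ h1 (LinearMap.range f).subtype
  apply hf
  ext x
  exact LinearMap.congr_fun h2 (⟨f x, x, rfl⟩ : LinearMap.range f)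

/-- Vanishing of maps passes to extensions. -/
theorem aux_ext (Λ : Type) [Ring Λ] {A X B Z : Type} [AddCommGroup A] [Module Λ A]
    [AddCommGroup X] [Module Λ X] [AddCommGroup B] [Module Λ B] [AddCommGroup Z] [Module Λ Z]
    (i : A →ₗ[Λ] X) (p : X →ₗ[Λ] B) (hp : Function.Surjective p)
    (hip : LinearMap.ker p ≤ LinearMap.range i)
    (hA : ∀ f : A →ₗ[Λ] Z, f = 0) (hB : ∀ f : B →ₗ[Λ] Z, f = 0) (f : X →ₗ[Λ] Z) : f = 0 := by
  have h1 := hA (f.comp i)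
  have hk : LinearMap.ker p ≤ LinearMap.ker f := by
    intro x hx
    obtain ⟨a, rfl⟩ := hip hx
    exact LinearMap.congr_fun h1 a
  have h2 := hB (((LinearMap.ker p).liftQ f hk).comp
    (p.quotKerEquivOfSurjective hp).symm.toLinearMap)
  ext x
  have h3 := LinearMap.congr_fun h2 (p x)
  have h4 : (p.quotKerEquivOfSurjective hp).symm (p x) = (LinearMap.ker p).mkQ x := by
    rw [LinearEquiv.symm_apply_eq]; rfl
  simp only [LinearMap.comp_apply, LinearEquiv.coe_coe, h4] at h3
  simpa using h3

theorem aux_filt (Λ : Type) [Ring Λ] (S : Set (Mdl Λ)) (Z : Mdl Λ)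
    (hZ : ∀ A ∈ S, ∀ h : A.carrier →ₗ[Λ] Z.carrier, h = 0) (X : Mdl Λ) (hX : Filt Λ S X) :
    ∀ h : X.carrier →ₗ[Λ] Z.carrier, h = 0 := by
  induction hX with
  | of_subsingleton X h =>
    intro f
    ext x
    rw [Subsingleton.elim x 0]; simp
  | step X N' Y hY hN e ih =>
    obtain ⟨e⟩ := e
    refine aux_ext Λ N'.subtype (e.toLinearMap.comp N'.mkQ)
      (e.surjective.comp (Submodule.mkQ_surjective _)) ?_ ih (hZ Y hY)
    rw [LinearEquiv.ker_comp, Submodule.ker_mkQ, Submodule.range_subtype]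

/-- Let `T` be a torsion class and `M` an indecomposable module not in
`T` whose proper factors all lie in `T`.  Let `N ∈ Filt(T ∪ {M}) \ T` be such that every
proper factor of `N` lies in `T`.  If `Filt(T ∪ {M})` covers `T` in `tors Λ`, then
`N ≅ M`. -/
theorem statement7 (k : Type) [Field k] (Λ : Type) [Ring Λ] [Algebra k Λ]
    [FiniteDimensional k Λ] (T : Set (Mdl Λ)) (hT : IsTorsionClass Λ T)
    (M : Mdl Λ) (hMfin : Module.Finite Λ M.carrier) (hMindec : Indec Λ M)
    (hMnotmem : M ∉ T) (hMfac : ∀ N : Mdl Λ, IsProperFactor Λ M N → N ∈ T)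
    (N : Mdl Λ) (hNmem : N ∈ FiltSet Λ (insert M T)) (hNnotmem : N ∉ T)
    (hNfac : ∀ N' : Mdl Λ, IsProperFactor Λ N N' → N' ∈ T)
    (hcov : TorsCovers Λ (FiltSet Λ (insert M T)) T) :
    MIso Λ N M := by
  obtain ⟨hT', -, hTT', hmax⟩ := hcov
  have hMF := aux_torsionfree Λ T hT M hMnotmem hMfac
  have hNF := aux_torsionfree Λ T hT N hNnotmem hNfac
  have hMne : (LinearMap.id : M.carrier →ₗ[Λ] M.carrier) ≠ 0 := by
    intro h
    apply hMnotmem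
    exact hT.zero_mem M ⟨fun x y => (LinearMap.congr_fun h x).trans (LinearMap.congr_fun h y).symm⟩
  have hNne : (LinearMap.id : N.carrier →ₗ[Λ] N.carrier) ≠ 0 := by
    intro h
    apply hNnotmem
    exact hT.zero_mem N ⟨fun x y => (LinearMap.congr_fun h x).trans (LinearMap.congr_fun h y).symm⟩
  -- a nonzero map `M → N`
  have hMN : ∃ g : M.carrier →ₗ[Λ] N.carrier, g ≠ 0 := by
    by_contra hcon
    push Not at hcon
    refine hNne (aux_filt Λ (insert M T) N ?_ N hNmem _)
    rintro A (rfl | hA)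
    · exact hcon
    · exact hNF A hA
  -- a nonzero map `N → M`
  have hNM : ∃ g : N.carrier →ₗ[Λ] M.carrier, g ≠ 0 := by
    by_contra hcon
    push Not at hcon
    let Y : Set (Mdl Λ) := {X | X ∈ FiltSet Λ (insert M T) ∧
      ∀ h : X.carrier →ₗ[Λ] M.carrier, h = 0}
    have hYfac : ∀ A ∈ Y, ∀ B : Mdl Λ, IsFactor Λ A B → B ∈ Y := by
      rintro A ⟨hA, hA'⟩ B ⟨p, hp⟩
      refine ⟨hT'.factor_closed A hA B ⟨p, hp⟩, fun h => ?_⟩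
      have := hA' (h.comp p)
      ext b
      obtain ⟨a, rfl⟩ := hp b
      exact LinearMap.congr_fun this a
    have hY : IsTorsionClass Λ Y := by
      refine ⟨fun A hA => hT'.fin A hA.1, fun A hA => ⟨hT'.zero_mem A hA, fun h => ?_⟩, ?_,
        hYfac, ?_⟩
      · ext x
        rw [Subsingleton.elim x 0]; simp
      · rintro A hA B ⟨e⟩
        exact hYfac A hA B ⟨e.toLinearMap, e.surjective⟩
      · rintro A ⟨hA, hA'⟩ B ⟨hB, hB'⟩ X ⟨i, p, hi, hp, hip⟩
        exact ⟨hT'.ext_closed A hA B hB X ⟨i, p, hi, hp, hip⟩,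
          aux_ext Λ i p hp hip.ge hA' hB'⟩
    have hNY : N ∈ Y := ⟨hNmem, hcon⟩
    have hTY : T ⊆ Y := fun A hA => ⟨hTT'.1 hA, hMF A hA⟩
    have hEq := hmax Y hY ⟨hTY, fun h => hNnotmem (h hNY)⟩ (fun A hA => hA.1)
    have hMT' : M ∈ FiltSet Λ (insert M T) := by
      refine Filt.step M ⊥ M (Set.mem_insert _ _) (Filt.of_subsingleton _ ?_)
        ⟨Submodule.quotEquivOfEqBot _ rfl⟩
      exact inferInstanceAs (Subsingleton (⊥ : Submodule Λ M.carrier))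
    rw [← hEq] at hMT'
    exact hMne (hMT'.2 _)
  obtain ⟨g, hg⟩ := hMN
  obtain ⟨f, hf⟩ := hNM
  have hgi := aux_injective Λ T M hMfac N hNF g hg
  have hfi := aux_injective Λ T N hNfac M hMF f hf
  have : IsArtinianRing Λ := IsArtinianRing.of_finite k Λ
  have : Module.Finite Λ N.carrier := hT'.fin N hNmem
  have hs : Function.Surjective (g.comp f) :=
    IsArtinian.surjective_of_injective_endomorphism (g.comp f) (hgi.comp hfi)
  have hfs : Function.Surjective f := by
    intro m
    obtain ⟨n, hn⟩ := hs (g m)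
    exact ⟨n, hgi hn⟩
  exact ⟨LinearEquiv.ofBijective f ⟨hfi, hfs⟩⟩
end

section
/- Let T be a torsion class in mod Λ and M an indecomposable module not in T such that every proper factor of M belongs to T, and set T' = Filt(T ∪ {M}). Then T' covers T in tors Λ if and only if M is a factor module of every module N ∈ T' \ T. -/
variable (Λ : Type) [Ring Λ]

namespace S8

variable {Λ}

theorem filt_iso {S : Set (Mdl Λ)} {X : Mdl Λ} (h : Filt Λ S X) :
    ∀ Y : Mdl Λ, (X.carrier ≃ₗ[Λ] Y.carrier) → Filt Λ S Y := by
  induction h with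
  | of_subsingleton X h =>
    intro Y e
    exact Filt.of_subsingleton Y (e.symm.toEquiv.subsingleton)
  | step X N Z hZ hN e ih =>
    intro Y f
    obtain ⟨e⟩ := e
    refine Filt.step Y (N.map (f : X.carrier →ₗ[Λ] Y.carrier)) Z hZ
      (ih (Mdl.of Λ _) (f.submoduleMap N)) ⟨?_⟩
    exact (Submodule.Quotient.equiv N _ f rfl).symm.trans e

theorem filt_of_mem {S : Set (Mdl Λ)} {X : Mdl Λ} (h : X ∈ S) : Filt Λ S X :=
  Filt.step X ⊥ X h (Filt.of_subsingleton _
    (inferInstanceAs (Subsingleton (⊥ : Submodule Λ X.carrier))))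
    ⟨Submodule.quotEquivOfEqBot ⊥ rfl⟩

theorem filt_ext {S : Set (Mdl Λ)} {A B : Mdl Λ} (hA : Filt Λ S A) (hB : Filt Λ S B) :
    ∀ (X : Mdl Λ) (f : A.carrier →ₗ[Λ] X.carrier) (g : X.carrier →ₗ[Λ] B.carrier),
      Function.Injective f → Function.Surjective g → LinearMap.range f = LinearMap.ker g →
      Filt Λ S X := by
  induction hB with
  | of_subsingleton B h =>
    intro X f g hf hg hfg
    refine filt_iso hA X (LinearEquiv.ofBijective f ⟨hf, ?_⟩)
    rw [← LinearMap.range_eq_top, hfg, eq_top_iff]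
    intro x _
    exact Subsingleton.elim _ _
  | step B N Z hZ hN e ih =>
    intro X f g hf hg hfg
    obtain ⟨e⟩ := e
    have hfz : ∀ a, g (f a) = 0 := fun a => by
      have : f a ∈ LinearMap.ker g := hfg ▸ LinearMap.mem_range_self f a
      exact this
    refine Filt.step X (N.comap g) Z hZ ?_ ⟨?_⟩
    · refine ih (Mdl.of Λ (N.comap g))
        (f.codRestrict (N.comap g) (fun a => by simp [hfz]))
        (g.restrict (p := N.comap g) (q := N) (fun x hx => hx)) ?_ ?_ ?_
      · intro a b hab
        exact hf (congrArg Subtype.val hab)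
      · rintro ⟨b, hb⟩
        obtain ⟨x, rfl⟩ := hg b
        exact ⟨⟨x, hb⟩, rfl⟩
      · ext ⟨x, hx⟩
        constructor
        · rintro ⟨a, ha⟩
          have : f a = x := congrArg Subtype.val ha
          subst this
          exact Subtype.ext (hfz a)
        · intro h
          have h0 : x ∈ LinearMap.ker g := congrArg Subtype.val h
          rw [← hfg] at h0
          obtain ⟨a, ha⟩ := h0
          exact ⟨a, Subtype.ext ha⟩
    · have hs : Function.Surjective (N.mkQ.comp g) :=
        (Submodule.mkQ_surjective N).comp hg
      have hk : N.comap g = LinearMap.ker (N.mkQ.comp g) := by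
        rw [LinearMap.ker_comp, Submodule.ker_mkQ]
      exact ((Submodule.quotEquivOfEq _ _ hk).trans
        (LinearMap.quotKerEquivOfSurjective _ hs)).trans e

theorem filt_factor {S : Set (Mdl Λ)}
    (hS : ∀ Z ∈ S, ∀ W : Mdl Λ, IsFactor Λ Z W →
      ∃ Z' ∈ S, Nonempty (W.carrier ≃ₗ[Λ] Z'.carrier))
    {X : Mdl Λ} (h : Filt Λ S X) :
    ∀ (Y : Mdl Λ) (f : X.carrier →ₗ[Λ] Y.carrier), Function.Surjective f → Filt Λ S Y := by
  induction h with
  | of_subsingleton X h =>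
    intro Y f hf
    exact Filt.of_subsingleton Y hf.subsingleton
  | step X N Z hZ hN e ih =>
    intro Y f hf
    obtain ⟨e⟩ := e
    have hsurj : Function.Surjective (N.mapQ (N.map f) f (Submodule.le_comap_map f N)) := by
      intro y
      obtain ⟨y, rfl⟩ := Submodule.mkQ_surjective _ y
      obtain ⟨x, rfl⟩ := hf y
      exact ⟨N.mkQ x, rfl⟩
    obtain ⟨Z', hZ', e'⟩ := hS Z hZ (Mdl.of Λ (Y.carrier ⧸ N.map f))
      ⟨(N.mapQ (N.map f) f (Submodule.le_comap_map f N)).comp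
        (e.symm : Z.carrier →ₗ[Λ] _), hsurj.comp e.symm.surjective⟩
    refine Filt.step Y (N.map f) Z' hZ' ?_ e'
    refine ih (Mdl.of Λ (N.map f)) (f.submoduleMap N) (f.submoduleMap_surjective N)

theorem filt_fin {S : Set (Mdl Λ)} (hS : ∀ Z ∈ S, Module.Finite Λ Z.carrier)
    {X : Mdl Λ} (h : Filt Λ S X) : Module.Finite Λ X.carrier := by
  induction h with
  | of_subsingleton X h => infer_instance
  | step X N Z hZ hN e ih =>
    obtain ⟨e⟩ := e
    have := hS Z hZ
    have : Module.Finite Λ (X.carrier ⧸ N) := Module.Finite.equiv e.symm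
    have : Module.Finite Λ N := ih
    exact Module.Finite.of_submodule_quotient N

theorem filt_sub {S Y : Set (Mdl Λ)} (hY : IsTorsionClass Λ Y) (hS : S ⊆ Y)
    {X : Mdl Λ} (h : Filt Λ S X) : X ∈ Y := by
  induction h with
  | of_subsingleton X h => exact hY.zero_mem X h
  | step X N Z hZ hN e ih =>
    obtain ⟨e⟩ := e
    refine hY.ext_closed _ ih _ (hS hZ) X
      ⟨N.subtype, (e : _ →ₗ[Λ] Z.carrier).comp N.mkQ, N.injective_subtype, ?_, ?_⟩
    · exact e.surjective.comp (Submodule.mkQ_surjective N)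
    · rw [LinearEquiv.ker_comp, Submodule.ker_mkQ]
      exact N.range_subtype

theorem filt_tors {T : Set (Mdl Λ)} (hT : IsTorsionClass Λ T) {M : Mdl Λ}
    (hMfin : Module.Finite Λ M.carrier)
    (hMfac : ∀ N : Mdl Λ, IsProperFactor Λ M N → N ∈ T) :
    IsTorsionClass Λ (FiltSet Λ (insert M T)) where
  fin := fun X hX => filt_fin (by
    rintro Z (rfl | hZ)
    · exact hMfin
    · exact hT.fin Z hZ) hX
  zero_mem := fun X h => Filt.of_subsingleton X h
  iso_closed := fun X hX Y ⟨e⟩ => filt_iso hX Y e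
  factor_closed := fun X hX Y ⟨f, hf⟩ => filt_factor (by
    rintro Z (rfl | hZ) W ⟨g, hg⟩
    · by_cases hi : Function.Injective g
      · exact ⟨Z, Or.inl rfl, ⟨(LinearEquiv.ofBijective g ⟨hi, hg⟩).symm⟩⟩
      · exact ⟨W, Or.inr (hMfac W ⟨g, hg, hi⟩), ⟨LinearEquiv.refl _ _⟩⟩
    · exact ⟨W, Or.inr (hT.factor_closed Z hZ W ⟨g, hg⟩), ⟨LinearEquiv.refl _ _⟩⟩) hX Y f hf
  ext_closed := fun A hA B hB X ⟨f, g, hf, hg, hfg⟩ => filt_ext hA hB X f g hf hg hfg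

/-- Every map from a module of `T` to `M` vanishes. -/
theorem hom_zero {T : Set (Mdl Λ)} (hT : IsTorsionClass Λ T) {M : Mdl Λ}
    (hMnotmem : M ∉ T) (hMfac : ∀ N : Mdl Λ, IsProperFactor Λ M N → N ∈ T)
    (N : Mdl Λ) (hN : N ∈ T) (f : N.carrier →ₗ[Λ] M.carrier) : f = 0 := by
  by_contra hf
  apply hMnotmem
  have h1 : Mdl.of Λ (LinearMap.range f) ∈ T :=
    hT.factor_closed N hN _ ⟨f.rangeRestrict, f.surjective_rangeRestrict⟩
  have h2 : Mdl.of Λ (M.carrier ⧸ LinearMap.range f) ∈ T := by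
    refine hMfac _ ⟨(LinearMap.range f).mkQ, Submodule.mkQ_surjective _, fun hi => hf ?_⟩
    have := LinearMap.ker_eq_bot.mpr hi
    erw [Submodule.ker_mkQ] at this
    exact LinearMap.range_eq_bot.mp this
  refine hT.ext_closed _ h1 _ h2 M ⟨(LinearMap.range f).subtype, (LinearMap.range f).mkQ,
    Submodule.injective_subtype _, Submodule.mkQ_surjective _, ?_⟩
  exact (Submodule.range_subtype _).trans (Submodule.ker_mkQ _).symm

theorem endo {T : Set (Mdl Λ)} (hT : IsTorsionClass Λ T) {M : Mdl Λ}
    [IsArtinian Λ M.carrier]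
    (hMnotmem : M ∉ T) (hMfac : ∀ N : Mdl Λ, IsProperFactor Λ M N → N ∈ T)
    (f : M.carrier →ₗ[Λ] M.carrier) : f = 0 ∨ Function.Surjective f := by
  by_cases hi : Function.Injective f
  · exact Or.inr (IsArtinian.surjective_of_injective_endomorphism f hi)
  · left
    have h1 : Mdl.of Λ (LinearMap.range f) ∈ T :=
      hMfac _ ⟨f.rangeRestrict, f.surjective_rangeRestrict, fun h => hi fun a b hab =>
        h (Subtype.ext hab)⟩
    have h2 := hom_zero hT hMnotmem hMfac _ h1 (LinearMap.range f).subtype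
    ext x
    exact LinearMap.congr_fun h2 (⟨f x, x, rfl⟩ : LinearMap.range f)

theorem filt_hom {T : Set (Mdl Λ)} (hT : IsTorsionClass Λ T) {M : Mdl Λ}
    [IsArtinian Λ M.carrier]
    (hMnotmem : M ∉ T) (hMfac : ∀ N : Mdl Λ, IsProperFactor Λ M N → N ∈ T)
    {X : Mdl Λ} (h : Filt Λ (insert M T) X) :
    ∀ g : X.carrier →ₗ[Λ] M.carrier, g = 0 ∨ Function.Surjective g := by
  induction h with
  | of_subsingleton X h =>
    intro g
    left
    ext x
    rw [Subsingleton.elim x 0, map_zero, map_zero]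
  | step X N Z hZ hN e ih =>
    intro g
    obtain ⟨e⟩ := e
    rcases ih (g.comp N.subtype) with h | h
    · have hle : N ≤ LinearMap.ker g := fun x hx => LinearMap.congr_fun h (⟨x, hx⟩ : N)
      have key : (N.liftQ g hle).comp (e.symm : Z.carrier →ₗ[Λ] _) = 0 ∨
          Function.Surjective ((N.liftQ g hle).comp (e.symm : Z.carrier →ₗ[Λ] _)) := by
        rcases hZ with rfl | hZ
        · exact endo hT hMnotmem hMfac _
        · exact Or.inl (hom_zero hT hMnotmem hMfac Z hZ _)
      rcases key with h0 | h0
      · left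
        ext x
        have := LinearMap.congr_fun h0 (e (N.mkQ x))
        simpa using this
      · right
        intro m
        obtain ⟨z, hz⟩ := h0 m
        obtain ⟨x, hx⟩ := Submodule.mkQ_surjective N (e.symm z)
        refine ⟨x, ?_⟩
        rw [← hz]
        simp [← hx]
    · right
      intro m
      obtain ⟨n, hn⟩ := h m
      exact ⟨_, hn⟩

end S8

/-- Let `T` be a torsion class and `M` an indecomposable module not in
`T` whose proper factors all lie in `T`, and set `T' = Filt(T ∪ {M})`.  Then `T'` covers
`T` in `tors Λ` if and only if `M` is a factor module of every `N ∈ T' \ T`. -/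
theorem statement8 (k : Type) [Field k] (Λ : Type) [Ring Λ] [Algebra k Λ]
    [FiniteDimensional k Λ] (T : Set (Mdl Λ)) (hT : IsTorsionClass Λ T)
    (M : Mdl Λ) (hMfin : Module.Finite Λ M.carrier) (hMindec : Indec Λ M)
    (hMnotmem : M ∉ T) (hMfac : ∀ N : Mdl Λ, IsProperFactor Λ M N → N ∈ T) :
    TorsCovers Λ (FiltSet Λ (insert M T)) T ↔
      ∀ N ∈ FiltSet Λ (insert M T), N ∉ T → IsFactor Λ N M := by
  have hT' := S8.filt_tors hT hMfin hMfac
  have hMT' : M ∈ FiltSet Λ (insert M T) := S8.filt_of_mem (Set.mem_insert _ _)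
  have hTT' : T ⊆ FiltSet Λ (insert M T) := fun X hX =>
    S8.filt_of_mem (Set.mem_insert_of_mem _ hX)
  have : IsArtinianRing Λ := IsArtinianRing.of_finite k Λ
  have : IsArtinian Λ M.carrier := inferInstance
  constructor
  · rintro ⟨-, -, -, hcov⟩ N hN hNT
    by_contra hno
    have hN0 : ∀ f : N.carrier →ₗ[Λ] M.carrier, f = 0 := fun f =>
      (S8.filt_hom hT hMnotmem hMfac hN f).resolve_right fun hs => hno ⟨f, hs⟩
    let Y : Set (Mdl Λ) := {X | X ∈ FiltSet Λ (insert M T) ∧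
      ∀ f : X.carrier →ₗ[Λ] M.carrier, f = 0}
    have hfac : ∀ X ∈ Y, ∀ Z : Mdl Λ, IsFactor Λ X Z → Z ∈ Y := by
      rintro X ⟨hX, hX0⟩ Z ⟨f, hf⟩
      refine ⟨hT'.factor_closed X hX Z ⟨f, hf⟩, fun g => ?_⟩
      have h := hX0 (g.comp f)
      ext z
      obtain ⟨x, rfl⟩ := hf z
      exact LinearMap.congr_fun h x
    have hY : IsTorsionClass Λ Y :=
      { fin := fun X hX => hT'.fin X hX.1
        zero_mem := fun X h => ⟨hT'.zero_mem X h, fun f => by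
          ext x
          rw [Subsingleton.elim x 0, map_zero, map_zero]⟩
        iso_closed := fun X hX Z ⟨e⟩ => hfac X hX Z ⟨e, e.surjective⟩
        factor_closed := hfac
        ext_closed := by
          rintro A ⟨hA, hA0⟩ B ⟨hB, hB0⟩ X ⟨f, g, hf, hg, hfg⟩
          refine ⟨hT'.ext_closed A hA B hB X ⟨f, g, hf, hg, hfg⟩, fun h => ?_⟩
          rcases S8.filt_hom hT hMnotmem hMfac
            (hT'.ext_closed A hA B hB X ⟨f, g, hf, hg, hfg⟩) h with h0 | hs
          · exact h0
          have hle : LinearMap.ker g ≤ LinearMap.ker h := by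
            rw [← hfg]
            rintro _ ⟨a, rfl⟩
            exact LinearMap.congr_fun (hA0 (h.comp f)) a
          have h1 := hB0 (((LinearMap.ker g).liftQ h hle).comp
            ((g.quotKerEquivOfSurjective hg).symm : B.carrier →ₗ[Λ] _))
          ext x
          have h2 := LinearMap.congr_fun h1 (g.quotKerEquivOfSurjective hg
            ((LinearMap.ker g).mkQ x))
          simpa only [LinearMap.comp_apply, LinearEquiv.coe_coe, LinearEquiv.symm_apply_apply,
            Submodule.mkQ_apply, Submodule.liftQ_apply, LinearMap.zero_apply] using h2 }
    have hTY : T ⊆ Y := fun X hX => ⟨hTT' hX, S8.hom_zero hT hMnotmem hMfac X hX⟩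
    have hEq := hcov Y hY ⟨hTY, fun h => hNT (h ⟨hN, hN0⟩)⟩ (fun X hX => hX.1)
    have hMY : M ∈ Y := hEq ▸ hMT'
    have hid := hMY.2 LinearMap.id
    obtain ⟨x, hx⟩ := @exists_ne _ hMindec.1 (0 : M.carrier)
    exact hx (LinearMap.congr_fun hid x)
  · intro h
    refine ⟨hT', hT, ⟨hTT', fun h' => hMnotmem (h' hMT')⟩, fun Y hY hTY hYT' => ?_⟩
    refine Set.Subset.antisymm hYT' fun X hX => ?_
    obtain ⟨N, hNY, hNT⟩ := Set.exists_of_ssubset hTY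
    have hMY : M ∈ Y := hY.factor_closed N hNY M (h N (hYT' hNY) hNT)
    exact S8.filt_sub hY (Set.insert_subset hMY hTY.1) hX
end

section
/- Let T be a torsion class in mod Λ and M an indecomposable Λ-module. If M is a minimal extending module for T, then Filt(T ∪ {M}) covers T in tors Λ. -/
variable (Λ : Type) [Ring Λ]

theorem aux_filt_iso (S : Set (Mdl Λ)) {X : Mdl Λ} (h : Filt Λ S X) :
    ∀ Y : Mdl Λ, (X.carrier ≃ₗ[Λ] Y.carrier) → Filt Λ S Y := by
  induction h with
  | of_subsingleton X h =>
    intro Y e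
    exact Filt.of_subsingleton Y e.symm.injective.subsingleton
  | step X N S' hS hN e ih =>
    intro Y φ
    obtain ⟨e⟩ := e
    refine Filt.step Y (N.map (φ : X.carrier →ₗ[Λ] Y.carrier)) S' hS
      (ih _ (φ.submoduleMap N)) ⟨?_⟩
    exact (Submodule.Quotient.equiv N _ φ rfl).symm.trans e

theorem aux_filt_step (S : Set (Mdl Λ)) {A X B : Mdl Λ} (hA : Filt Λ S A) (hB : B ∈ S)
    (f : A.carrier →ₗ[Λ] X.carrier) (g : X.carrier →ₗ[Λ] B.carrier) (h : IsSES Λ f g) :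
    Filt Λ S X := by
  obtain ⟨hf, hg, hfg⟩ := h
  refine Filt.step X (LinearMap.ker g) B hB ?_ ⟨g.quotKerEquivOfSurjective hg⟩
  rw [← hfg]
  exact aux_filt_iso Λ S hA _ (LinearEquiv.ofInjective f hf)

theorem aux_filt_ext (S : Set (Mdl Λ)) {A B : Mdl Λ} (hA : Filt Λ S A) (hB : Filt Λ S B) :
    ∀ (X : Mdl Λ) (f : A.carrier →ₗ[Λ] X.carrier) (g : X.carrier →ₗ[Λ] B.carrier),
      IsSES Λ f g → Filt Λ S X := by
  induction hB with
  | of_subsingleton B h =>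
    rintro X f g ⟨hf, hg, hfg⟩
    refine aux_filt_iso Λ S hA X (LinearEquiv.ofBijective f ⟨hf, ?_⟩)
    rw [← LinearMap.range_eq_top, hfg, LinearMap.ker_eq_top]
    ext x
    exact Subsingleton.elim _ _
  | step B N S' hS hN e ih =>
    rintro X f g ⟨hf, hg, hfg⟩
    obtain ⟨e⟩ := e
    have hmem : ∀ a, f a ∈ N.comap g := by
      intro a
      have : f a ∈ LinearMap.ker g := hfg ▸ LinearMap.mem_range_self f a
      rw [LinearMap.mem_ker] at this
      simp [this]
    have h1 : Filt Λ S (Mdl.of Λ (N.comap g)) := by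
      refine ih (Mdl.of Λ (N.comap g)) (f.codRestrict (N.comap g) hmem)
        (g.restrict (fun x hx => hx)) ⟨?_, ?_, ?_⟩
      · intro a b hab
        exact hf (congrArg Subtype.val hab)
      · rintro ⟨b, hb⟩
        obtain ⟨x, rfl⟩ := hg b
        exact ⟨⟨x, hb⟩, rfl⟩
      · ext ⟨x, hx⟩
        have := SetLike.ext_iff.mp hfg x
        rw [LinearMap.mem_range, LinearMap.mem_ker] at this
        constructor
        · rintro ⟨a, ha⟩
          exact Subtype.ext (this.mp ⟨a, congrArg Subtype.val ha⟩)
        · intro h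
          obtain ⟨a, ha⟩ := this.mpr (congrArg Subtype.val h)
          exact ⟨a, Subtype.ext ha⟩
    refine aux_filt_step Λ S h1 hS (N.comap g).subtype
      ((e : (B.carrier ⧸ N) →ₗ[Λ] S'.carrier) ∘ₗ N.mkQ ∘ₗ g) ⟨?_, ?_, ?_⟩
    · exact Subtype.val_injective
    · exact e.surjective.comp ((Submodule.mkQ_surjective N).comp hg)
    · ext x
      change x ∈ LinearMap.range (N.comap g).subtype ↔ _
      rw [Submodule.range_subtype]
      simp

theorem aux_filt_factor (T : Set (Mdl Λ)) (hT : IsTorsionClass Λ T)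
    (M : Mdl Λ) (hmin : IsMinExt Λ T M) {X : Mdl Λ} (h : Filt Λ (insert M T) X) :
    ∀ (Q : Mdl Λ) (f : X.carrier →ₗ[Λ] Q.carrier), Function.Surjective f →
      Filt Λ (insert M T) Q := by
  induction h with
  | of_subsingleton X h =>
    intro Q f hf
    exact Filt.of_subsingleton Q hf.subsingleton
  | step X N S hS hN e ih =>
    intro Q f hf
    obtain ⟨e⟩ := e
    have h1 : Filt Λ (insert M T) (Mdl.of Λ (N.map f)) :=
      ih (Mdl.of Λ (N.map f)) (f.submoduleMap N) (f.submoduleMap_surjective N)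
    let g : S.carrier →ₗ[Λ] (Q.carrier ⧸ N.map f) :=
      (Submodule.mapQ N (N.map f) f (Submodule.le_comap_map f N)) ∘ₗ
        (e.symm : S.carrier →ₗ[Λ] (X.carrier ⧸ N))
    have hg : Function.Surjective g := by
      intro q
      obtain ⟨q, rfl⟩ := Submodule.mkQ_surjective _ q
      obtain ⟨x, rfl⟩ := hf q
      refine ⟨e (N.mkQ x), ?_⟩
      simp only [g, LinearMap.comp_apply, LinearEquiv.coe_coe, LinearEquiv.symm_apply_apply]
      rfl
    have key : Mdl.of Λ (Q.carrier ⧸ N.map f) ∈ T → Filt Λ (insert M T) Q := fun hq =>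
      Filt.step Q (N.map f) _ (Or.inr hq) h1 ⟨LinearEquiv.refl _ _⟩
    rcases hS with rfl | hS
    · by_cases hi : Function.Injective g
      · exact Filt.step Q (N.map f) S (Or.inl rfl) h1 ⟨(LinearEquiv.ofBijective g ⟨hi, hg⟩).symm⟩
      · exact key (hmin.p1 _ ⟨g, hg, hi⟩)
    · exact key (hT.factor_closed S hS _ ⟨g, hg⟩)

theorem aux_filt_sub (S Y : Set (Mdl Λ)) (hY : IsTorsionClass Λ Y) (hS : S ⊆ Y) {X : Mdl Λ}
    (h : Filt Λ S X) : X ∈ Y := by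
  induction h with
  | of_subsingleton X h => exact hY.zero_mem X h
  | step X N S' hS' hN e ih =>
    obtain ⟨e⟩ := e
    refine hY.ext_closed _ ih _ (hS hS') X ⟨N.subtype,
      (e : (X.carrier ⧸ N) →ₗ[Λ] S'.carrier) ∘ₗ N.mkQ, Subtype.val_injective,
      e.surjective.comp N.mkQ_surjective, ?_⟩
    change LinearMap.range N.subtype = _
    rw [Submodule.range_subtype]
    ext x
    simp

theorem aux_filt_fin (S : Set (Mdl Λ)) (hS : ∀ X ∈ S, Module.Finite Λ X.carrier) {X : Mdl Λ}
    (h : Filt Λ S X) : Module.Finite Λ X.carrier := by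
  induction h with
  | of_subsingleton X h => infer_instance
  | step X N S' hS' hN e ih =>
    obtain ⟨e⟩ := e
    have := hS _ hS'
    have h1 : Module.Finite Λ (X.carrier ⧸ N) := Module.Finite.equiv e.symm
    have h2 : Module.Finite Λ N := ih
    exact Module.Finite.of_submodule_quotient N

inductive AuxG (T : Set (Mdl Λ)) (M : Mdl Λ) : Mdl Λ → Prop
  | base (X : Mdl Λ) (h : X ∈ T) : AuxG T M X
  | step (X N : Mdl Λ) (f : N.carrier →ₗ[Λ] X.carrier) (g : X.carrier →ₗ[Λ] M.carrier)
      (h : IsSES Λ f g) (hN : AuxG T M N) : AuxG T M X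

theorem aux_G_ext (T : Set (Mdl Λ)) (hT : IsTorsionClass Λ T)
    (M : Mdl Λ) (hmin : IsMinExt Λ T M) {N : Mdl Λ} (h : AuxG Λ T M N) :
    ∀ (X S : Mdl Λ) (f : N.carrier →ₗ[Λ] X.carrier) (g : X.carrier →ₗ[Λ] S.carrier),
      IsSES Λ f g → S ∈ T → AuxG Λ T M X := by
  induction h with
  | base N h =>
    intro X S f g hs hS
    exact AuxG.base X (hT.ext_closed _ h _ hS X ⟨f, g, hs⟩)
  | step N K i p hip hK ih =>
    rintro X S f g ⟨hf, hg, hfg⟩ hS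
    obtain ⟨hi, hp, hip⟩ := hip
    have hfg' : ∀ x, g x = 0 ↔ ∃ n, f n = x := fun x => (SetLike.ext_iff.mp hfg x).symm
    have hip' : ∀ x, p x = 0 ↔ ∃ n, i n = x := fun x => (SetLike.ext_iff.mp hip x).symm
    have hgf : ∀ n, g (f n) = 0 := fun n => (hfg' _).2 ⟨n, rfl⟩
    have hpi : ∀ n, p (i n) = 0 := fun n => (hip' _).2 ⟨n, rfl⟩
    let R : Submodule Λ X.carrier := LinearMap.range (f ∘ₗ i)
    have hR : ∀ x, x ∈ R ↔ ∃ c, f (i c) = x := fun x => Iff.rfl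
    have hker : LinearMap.ker p ≤ LinearMap.ker (R.mkQ ∘ₗ f) := by
      intro n hn
      obtain ⟨c, rfl⟩ := (hip' n).1 hn
      simp [hR]
    let j : M.carrier →ₗ[Λ] (X.carrier ⧸ R) :=
      (Submodule.liftQ (LinearMap.ker p) (R.mkQ ∘ₗ f) hker) ∘ₗ
        ((p.quotKerEquivOfSurjective hp).symm : M.carrier →ₗ[Λ] (N.carrier ⧸ LinearMap.ker p))
    have hj : ∀ n, j (p n) = R.mkQ (f n) := by
      intro n
      have : (p.quotKerEquivOfSurjective hp).symm (p n) = (LinearMap.ker p).mkQ n := by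
        rw [LinearEquiv.symm_apply_eq]; rfl
      simp only [j, LinearMap.comp_apply, LinearEquiv.coe_coe, this]
      rfl
    let q : (X.carrier ⧸ R) →ₗ[Λ] S.carrier := R.liftQ g (by
      rintro x hx
      obtain ⟨c, rfl⟩ := (hR x).1 hx
      exact hgf _)
    have hq : ∀ x, q (R.mkQ x) = g x := fun x => rfl
    have hjinj : Function.Injective j := by
      rw [injective_iff_map_eq_zero]
      intro m hm
      obtain ⟨n, rfl⟩ := hp m
      rw [hj, Submodule.mkQ_apply, Submodule.Quotient.mk_eq_zero] at hm
      obtain ⟨c, hc⟩ := (hR _).1 hm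
      rw [← hf hc, hpi]
    have hqs : Function.Surjective q := by
      intro s
      obtain ⟨x, rfl⟩ := hg s
      exact ⟨R.mkQ x, rfl⟩
    have hjq : LinearMap.range j = LinearMap.ker q := by
      ext y
      rw [LinearMap.mem_range, LinearMap.mem_ker]
      constructor
      · rintro ⟨m, rfl⟩
        obtain ⟨n, rfl⟩ := hp m
        rw [hj, hq, hgf]
      · intro hy
        obtain ⟨x, rfl⟩ := R.mkQ_surjective y
        rw [hq] at hy
        obtain ⟨n, rfl⟩ := (hfg' x).1 hy
        exact ⟨p n, hj n⟩
    have hqj : ∀ m, q (j m) = 0 := fun m => by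
      have : j m ∈ LinearMap.ker q := hjq ▸ LinearMap.mem_range_self j m
      exact this
    by_cases hsp : SplitsSES Λ (A := M) (M := Mdl.of Λ (X.carrier ⧸ R)) (B := S) j q
    · obtain ⟨s, hs⟩ := hsp
      have hs' : ∀ b, q (s b) = b := fun b => LinearMap.congr_fun hs b
      let s' : S.carrier →ₗ[Λ] (X.carrier ⧸ R) := s
      have hs'' : ∀ b, q (s' b) = b := hs'
      let r : (X.carrier ⧸ R) →ₗ[Λ] M.carrier :=
        ((LinearEquiv.ofInjective j hjinj).symm : _ →ₗ[Λ] M.carrier) ∘ₗ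
          (LinearMap.codRestrict (LinearMap.range j) (LinearMap.id - s' ∘ₗ q) (by
            intro y
            rw [hjq, LinearMap.mem_ker]
            simp [hs'']))
      have hjr : ∀ y, j (r y) = y - s' (q y) := by
        intro y
        have := congrArg Subtype.val ((LinearEquiv.ofInjective j hjinj).apply_symm_apply
          (LinearMap.codRestrict (LinearMap.range j) (LinearMap.id - s' ∘ₗ q) (by
            intro y
            rw [hjq, LinearMap.mem_ker]
            simp [hs'']) y))
        exact this
      have hrj : ∀ m, r (j m) = m := by
        intro m
        apply hjinj
        rw [hjr, hqj, map_zero, sub_zero]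
      let L : Submodule Λ X.carrier := LinearMap.ker (r ∘ₗ R.mkQ)
      have hL : ∀ x, x ∈ L ↔ r (R.mkQ x) = 0 := fun x => Iff.rfl
      have hKL : ∀ c, (f ∘ₗ i) c ∈ L := by
        intro c
        rw [hL]
        have : R.mkQ ((f ∘ₗ i) c) = 0 := by
          rw [Submodule.mkQ_apply, Submodule.Quotient.mk_eq_zero]
          exact ⟨c, rfl⟩
        rw [this, map_zero]
      have hLG : AuxG Λ T M (Mdl.of Λ L) := by
        refine ih (Mdl.of Λ L) S ((f ∘ₗ i).codRestrict L hKL) (g ∘ₗ L.subtype) ⟨?_, ?_, ?_⟩ hS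
        · intro a b hab
          exact hi (hf (congrArg Subtype.val hab))
        · intro b
          obtain ⟨x, hx⟩ := R.mkQ_surjective (s' b)
          have hxL : x ∈ L := by
            rw [hL]
            apply hjinj
            rw [hjr, hx, hs'', sub_self, map_zero]
          refine ⟨⟨x, hxL⟩, ?_⟩
          change g x = b
          rw [← hq, hx, hs'']
        · ext ⟨x, hx⟩
          constructor
          · rintro ⟨c, hc⟩
            have : f (i c) = x := congrArg Subtype.val hc
            change g x = 0
            rw [← this, hgf]
          · intro h
            change g x = 0 at h
            have h2 := hjr (R.mkQ x)
            rw [(hL x).1 hx, hq, h, map_zero, map_zero, sub_zero, Submodule.mkQ_apply, eq_comm,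
              Submodule.Quotient.mk_eq_zero] at h2
            obtain ⟨c, hc⟩ := (hR x).1 h2
            exact ⟨c, Subtype.ext hc⟩
      refine AuxG.step X (Mdl.of Λ L) L.subtype (r ∘ₗ R.mkQ)
        ⟨Subtype.val_injective, ?_, L.range_subtype⟩ hLG
      intro m
      obtain ⟨x, hx⟩ := R.mkQ_surjective (j m)
      exact ⟨x, by rw [LinearMap.comp_apply, hx, hrj]⟩
    · have hQ := hmin.p2 (Mdl.of Λ (X.carrier ⧸ R)) S j q ⟨hjinj, hqs, hjq⟩ hsp hS
      exact ih X (Mdl.of Λ (X.carrier ⧸ R)) (f ∘ₗ i) R.mkQ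
        ⟨hf.comp hi, R.mkQ_surjective, R.ker_mkQ.symm⟩ hQ

theorem aux_filt_G (T : Set (Mdl Λ)) (hT : IsTorsionClass Λ T)
    (M : Mdl Λ) (hmin : IsMinExt Λ T M) {X : Mdl Λ} (h : Filt Λ (insert M T) X) :
    AuxG Λ T M X := by
  induction h with
  | of_subsingleton X h => exact AuxG.base X (hT.zero_mem X h)
  | step X N S hS hN e ih =>
    obtain ⟨e⟩ := e
    have hses : IsSES Λ (A := Mdl.of Λ N) (M := X) (B := S) N.subtype
        ((e : (X.carrier ⧸ N) →ₗ[Λ] S.carrier) ∘ₗ N.mkQ) := by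
      refine ⟨Subtype.val_injective, e.surjective.comp N.mkQ_surjective, ?_⟩
      change LinearMap.range N.subtype = _
      rw [Submodule.range_subtype]
      ext x
      simp
    rcases hS with rfl | hS
    · exact AuxG.step X _ _ _ hses ih
    · exact aux_G_ext Λ T hT M hmin ih X S _ _ hses hS

/-- Let `T` be a torsion class in `mod Λ` and `M` an indecomposable
`Λ`-module.  If `M` is a minimal extending module for `T`, then `Filt(T ∪ {M})`
covers `T` in `tors Λ`. -/
theorem statement9 (k : Type) [Field k] (Λ : Type) [Ring Λ] [Algebra k Λ]
    [FiniteDimensional k Λ] (T : Set (Mdl Λ)) (hT : IsTorsionClass Λ T)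
    (M : Mdl Λ) (hMindec : Indec Λ M) (hmin : IsMinExt Λ T M) :
    TorsCovers Λ (FiltSet Λ (insert M T)) T := by
  have hsub : T ⊆ FiltSet Λ (insert M T) := fun X hX =>
    aux_filt_step Λ _ (Filt.of_subsingleton (Mdl.of Λ PUnit) (inferInstanceAs (Subsingleton PUnit)))
      (Or.inr hX) 0 LinearMap.id ⟨fun _ _ _ => rfl, Function.surjective_id, by simp⟩
  have hM : M ∈ FiltSet Λ (insert M T) :=
    aux_filt_step Λ _ (Filt.of_subsingleton (Mdl.of Λ PUnit) (inferInstanceAs (Subsingleton PUnit)))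
      (Or.inl rfl) 0 LinearMap.id ⟨fun _ _ _ => rfl, Function.surjective_id, by simp⟩
  have hMT : M ∉ T := by
    intro h
    obtain ⟨x, hx⟩ := @exists_ne _ hMindec.1 (0 : M.carrier)
    exact hx (LinearMap.congr_fun (hmin.p3 M h LinearMap.id) x)
  refine ⟨⟨?_, ?_, ?_, ?_, ?_⟩, hT, ⟨hsub, fun h => hMT (h hM)⟩, ?_⟩
  · intro X hX
    refine aux_filt_fin Λ _ ?_ hX
    rintro Z (rfl | hZ)
    · exact hmin.fin
    · exact hT.fin Z hZ
  · exact fun X h => Filt.of_subsingleton X h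
  · rintro X hX Z ⟨e⟩
    exact aux_filt_iso Λ _ hX Z e
  · rintro X hX Z ⟨f, hf⟩
    exact aux_filt_factor Λ T hT M hmin hX Z f hf
  · rintro A hA B hB X ⟨f, g, h⟩
    exact aux_filt_ext Λ _ hA hB X f g h
  · intro Y hY hTY hYF
    refine Set.Subset.antisymm hYF ?_
    obtain ⟨X, hXY, hXT⟩ := Set.exists_of_ssubset hTY
    have hMY : M ∈ Y := by
      cases aux_filt_G Λ T hT M hmin (hYF hXY) with
      | base _ h => exact absurd h hXT
      | step _ N f g h _ => exact hY.factor_closed X hXY M ⟨g, h.2.1⟩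
    intro Z hZ
    exact aux_filt_sub Λ _ Y hY (Set.insert_subset hMY hTY.1) hZ
end
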